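/- arXiv:2012.08878 — 11 statements merged into one kernel-verified Lean document; each statement's English description precedes it below -/
import Mathlib

section
/- Let P be a set of strings over Σ. If d : List (Σ ⊕ Σ) is a linear superstring of f(P), then the Σ-restriction of d is a linear superstring of P. -/
/-- `lift w` embeds a string over `α` into the barred alphabet `α ⊕ α` using unbarred letters. -/
def lift {α : Type*} (w : List α) : List (α ⊕ α) := w.map Sum.inl

/-- `bar w` embeds a string over `α` into the barred alphabet `α ⊕ α` using barred letters. -/
def bar {α : Type*} (w : List α) : List (α ⊕ α) := w.map Sum.inr

/-- `f(P) = {lift s | s ∈ P} ∪ {bar s | s ∈ P}`. -/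
def barred {α : Type*} (P : Set (List α)) : Set (List (α ⊕ α)) := (lift '' P) ∪ (bar '' P)

/-- A linear superstring of `P` contains every string of `P` as an infix. -/
def IsLinearSuperstring {β : Type*} (P : Set (List β)) (w : List β) : Prop := ∀ s ∈ P, s <:+: w

/-- `s` is a circular substring of the circular string `c` if `s` is an infix of `c^n`
for some `n ≥ 1`. -/
def IsCircularSubstring {β : Type*} (c s : List β) : Prop :=
  ∃ n, 1 ≤ n ∧ s <:+: (List.replicate n c).flatten

/-- A circular superstring of `P` has every string of `P` as a circular substring. -/
def IsCircularSuperstring {β : Type*} (P : Set (List β)) (c : List β) : Prop :=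
  ∀ s ∈ P, IsCircularSubstring c s

/-- The `Σ`-restriction of a string over the barred alphabet: keep the unbarred letters. -/
def restrict {α : Type*} (d : List (α ⊕ α)) : List α :=
  d.filterMap (Sum.elim some (fun _ => none))

/-- If `d` is a linear superstring of `f(P)`, then the `Σ`-restriction of `d` is a
linear superstring of `P`. -/
theorem restrict_isLinearSuperstring {α : Type*} (P : Set (List α)) (d : List (α ⊕ α))
    (hd : IsLinearSuperstring (barred P) d) :
    IsLinearSuperstring P (restrict d) := by 
  intro s hs
  obtain ⟨u, v, h⟩ := hd (lift s) (Or.inl ⟨s, hs, rfl⟩)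
  have hl : restrict (lift s) = s := by
    unfold restrict lift
    induction s with
    | nil => rfl
    | cons a t _ => simp [List.filterMap_map, Function.comp_def]
  refine ⟨restrict u, restrict v, ?_⟩
  rw [← h]
  conv_lhs => rw [← hl]
  simp [restrict, List.filterMap_append]
end

section
/- Let d : List (Σ ⊕ Σ) be a nonempty list whose first element lies in the range of Sum.inl and whose last element lies in the range of Sum.inr. If s : List (Σ ⊕ Σ) is a list all of whose letters lie in the range of Sum.inl, or all of whose letters lie in the range of Sum.inr, and s is an infix of the n-fold concatenation d^n for some n ≥ 1, then s is an infix of d itself. -/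
/-- If `d` is nonempty, starts with an unbarred letter and ends with a barred letter,
and `s` is an infix of `d^n` (`n ≥ 1`) whose letters are all unbarred or all barred,
then `s` is an infix of `d`. -/
theorem infix_of_infix_pow {α : Type*} (d : List (α ⊕ α))
    (hd : d ≠ [])
    (hhead : ∃ a : α, d.head? = some (Sum.inl a))
    (hlast : ∃ a : α, d.getLast? = some (Sum.inr a))
    (s : List (α ⊕ α))
    (hs : (∀ x ∈ s, ∃ a : α, x = Sum.inl a) ∨ (∀ x ∈ s, ∃ a : α, x = Sum.inr a))
    (n : ℕ) (hn : 1 ≤ n)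
    (hinf : s <:+: (List.replicate n d).flatten) :
    s <:+: d := by 
  obtain ⟨a, ha⟩ := hhead
  obtain ⟨b, hb⟩ := hlast
  clear hn
  induction n with
  | zero =>
    simp at hinf
    subst hinf
    exact List.nil_infix
  | succ k ih =>
    rw [List.replicate_succ, List.flatten_cons, List.infix_append_iff] at hinf
    rcases hinf with h | h | ⟨t1, t2, rfl, h1, h2⟩
    · exact h
    · exact ih h
    · rcases List.eq_nil_or_concat t1 with rfl | ⟨u, x, rfl⟩
      · exact ih (by simpa using h2.isInfix)
      · cases t2 with
        | nil => simpa using h1.isInfix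
        | cons y v =>
          exfalso
          have hx : x = Sum.inr b := by
            obtain ⟨w, rfl⟩ := h1
            simpa using hb
          have hy : y = Sum.inl a := by
            obtain ⟨w, hw⟩ := h2
            cases k with
            | zero => simp at hw
            | succ k =>
              cases d with
              | nil => simp at ha
              | cons c d =>
                simp [List.replicate_succ] at hw ha
                rw [hw.1, ha]
          subst hx hy
          rcases hs with hs | hs
          · simpa using hs (Sum.inr b) (by simp)
          · simpa using hs (Sum.inl a) (by simp)
end

section
/- If a list c : List (Σ ⊕ Σ) contains at least one letter in the range of Sum.inl and at least one letter in the range of Sum.inr, then there exists k such that the rotation c.rotate k is nonempty, its first element lies in the range of Sum.inl, and its last element lies in the range of Sum.inr. -/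
lemma split_first_inl {α : Type*} (u : List (α ⊕ α)) (h : ∃ a : α, Sum.inl a ∈ u) :
    ∃ (p q : List (α ⊕ α)) (a : α), u = p ++ Sum.inl a :: q ∧ ∀ x ∈ p, ∃ b : α, x = Sum.inr b := by
  induction u with
  | nil => simp at h
  | cons x u ih =>
    rcases x with x | x
    · exact ⟨[], u, x, by simp, by simp⟩
    · obtain ⟨p, q, a, rfl, hp⟩ := ih (by simpa using h)
      refine ⟨Sum.inr x :: p, q, a, by simp, ?_⟩
      intro y hy
      rcases List.mem_cons.1 hy with rfl | hy
      · exact ⟨x, rfl⟩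
      · exact hp y hy

/-- If a list over the barred alphabet contains both an unbarred and a barred letter, then
some rotation of it is nonempty, starts with an unbarred letter and ends with a barred one. -/
theorem exists_rotate_head_inl_getLast_inr {α : Type*} (c : List (α ⊕ α))
    (hl : ∃ a : α, Sum.inl a ∈ c) (hr : ∃ a : α, Sum.inr a ∈ c) :
    ∃ k, c.rotate k ≠ [] ∧ (∃ a : α, (c.rotate k).head? = some (Sum.inl a)) ∧
      (∃ a : α, (c.rotate k).getLast? = some (Sum.inr a)) := by
  obtain ⟨b, hb⟩ := hr
  obtain ⟨s, t, rfl⟩ := List.append_of_mem hb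
  have hu : ∃ a : α, Sum.inl a ∈ t ++ s := by
    obtain ⟨a, ha⟩ := hl
    refine ⟨a, ?_⟩
    simp at ha ⊢
    tauto
  obtain ⟨p, q, a, hpq, hp⟩ := split_first_inl _ hu
  have h1 : (s ++ Sum.inr b :: t).rotate (s ++ [Sum.inr b]).length
      = p ++ (Sum.inl a :: q ++ [Sum.inr b]) := by
    have := List.rotate_append_length_eq (s ++ [Sum.inr b]) t
    rw [List.append_assoc, List.singleton_append] at this
    rw [this, ← List.append_assoc, hpq]
    simp
  refine ⟨(s ++ [Sum.inr b]).length + p.length, ?_⟩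
  rw [← List.rotate_rotate, h1, List.rotate_append_length_eq]
  refine ⟨by simp, ⟨a, by simp⟩, ?_⟩
  rcases List.eq_nil_or_concat p with rfl | ⟨p', y, rfl⟩
  · refine ⟨b, ?_⟩
    rw [List.append_nil, List.getLast?_append]
    simp
  · obtain ⟨z, rfl⟩ := hp y (by simp)
    refine ⟨z, ?_⟩
    rw [List.getLast?_append]
    simp
end

section
/- Let P be a set of strings over Σ and let c be a circular superstring of f(P). If d is a rotation of c (d = c.rotate k for some k) such that d is nonempty, its first element lies in the range of Sum.inl, and its last element lies in the range of Sum.inr, then d is a linear superstring of f(P). -/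
theorem rot_flatten {β : Type*} (x y : List β) (n : ℕ) :
    y ++ (List.replicate n (x ++ y)).flatten ++ x
      = (List.replicate (n + 1) (y ++ x)).flatten := by
  induction n with
  | zero => simp
  | succ n ih =>
    rw [List.replicate_succ (n := n + 1), List.flatten_cons, ← ih, List.replicate_succ]
    simp

theorem mono_infix {α : Type*} (d s : List (α ⊕ α)) (a b : α)
    (hhead : d.head? = some (Sum.inl a)) (hlast : d.getLast? = some (Sum.inr b))
    (hs : ∀ x ∈ s, ∀ y ∈ s, x.isLeft = y.isLeft) (n : ℕ)
    (h : s <:+: (List.replicate n d).flatten) : s <:+: d := by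
  induction n with
  | zero =>
    have : s = [] := by simpa using h
    subst this
    exact List.nil_infix
  | succ n ih =>
    rw [List.replicate_succ, List.flatten_cons, List.infix_append_iff] at h
    rcases h with h | h | ⟨t, u, rfl, ht, hu⟩
    · exact h
    · exact ih h
    · rcases List.eq_nil_or_concat t with rfl | ⟨t', z, rfl⟩
      · exact ih (by simpa using hu.isInfix)
      · rcases u with _ | ⟨w, u⟩
        · simpa using ht.isInfix
        · exfalso
          have hz : z = Sum.inr b := by
            obtain ⟨q, rfl⟩ := ht
            simpa [← List.append_assoc] using hlast
          have hw : w = Sum.inl a := by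
            obtain ⟨q, hq⟩ := hu
            rcases n with _ | n
            · simp at hq
            · rcases d with _ | ⟨e, d⟩
              · simp at hhead
              · simp [List.replicate_succ] at hq hhead
                rw [hq.1, hhead]
          have := hs z (by simp) w (by simp)
          simp [hz, hw] at this

/-- A rotation of a circular superstring of `f(P)` which is nonempty, starts with an unbarred
letter and ends with a barred letter is a linear superstring of `f(P)`. -/
theorem rotate_isLinearSuperstring {α : Type*} (P : Set (List α)) (c : List (α ⊕ α))
    (hc : IsCircularSuperstring (barred P) c) (k : ℕ) (d : List (α ⊕ α))
    (hd : d = c.rotate k) (hne : d ≠ [])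
    (hhead : ∃ a : α, d.head? = some (Sum.inl a))
    (hlast : ∃ a : α, d.getLast? = some (Sum.inr a)) :
    IsLinearSuperstring (barred P) d := by
  obtain ⟨a, ha⟩ := hhead
  obtain ⟨b, hb⟩ := hlast
  intro s hs
  obtain ⟨n, -, hn⟩ := hc s hs
  have hmono : ∀ x ∈ s, ∀ y ∈ s, x.isLeft = y.isLeft := by
    rcases hs with ⟨w, -, rfl⟩ | ⟨w, -, rfl⟩
    · simp [lift]
    · simp [bar]
  apply mono_infix d s a b ha hb hmono (n + 1)
  rw [hd, List.rotate_eq_drop_append_take_mod, ← rot_flatten, List.take_append_drop]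
  exact hn.trans ⟨_, _, rfl⟩
end

section
/- Let P be a set of strings over Σ and let c be a circular superstring of f(P). Then there exists a linear superstring w of P with 2 * w.length ≤ c.length. -/
theorem infix_split_aux {β : Type*} {s a b : List β} {x : β} (hx : x ∉ s)
    (h : s <:+: a ++ x :: b) : s <:+: a ∨ s <:+: b := by
  obtain ⟨p, q, h⟩ := h
  rcases List.append_eq_append_iff.1 h with ⟨e, h1, h2⟩ | ⟨e, h1, h2⟩
  · exact Or.inl ⟨p, e, h1.symm⟩
  · cases e with
    | nil => exact Or.inl ⟨p, [], by simpa using h1⟩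
    | cons y e =>
      simp only [List.cons_append, List.cons.injEq] at h2
      obtain ⟨rfl, h2⟩ := h2
      rcases List.append_eq_append_iff.1 h1 with ⟨z, h3, h4⟩ | ⟨z, h3, h4⟩
      · exact absurd (by rw [h4]; simp) hx
      · cases z with
        | nil => exact absurd (by rw [List.nil_append] at h4; rw [← h4]; simp) hx
        | cons y' z =>
          simp only [List.cons_append, List.cons.injEq] at h4
          exact Or.inr ⟨z, q, by rw [h2, h4.2]⟩

theorem infix_power_aux {β : Type*} {s u v : List β} {x : β} (hx : x ∉ s) (n : ℕ)
    (h : s <:+: v ++ (List.replicate n (u ++ x :: v)).flatten) : s <:+: v ++ u := by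
  induction n with
  | zero =>
    have h' : s <:+: v := by simpa using h
    exact h'.trans ⟨[], u, by simp⟩
  | succ n ih =>
    have h' : s <:+: (v ++ u) ++ x :: (v ++ (List.replicate n (u ++ x :: v)).flatten) := by
      simpa [List.replicate_succ] using h
    exact (infix_split_aux hx h').elim id ih

theorem one_side_aux {α β : Type*} (P : Set (List α)) (c : List β) (i : α → β)
    (g : β → Option α) (hg : ∀ a, g (i a) = some a)
    (hc : ∀ s ∈ P, IsCircularSubstring c (s.map i)) (x : β) (hx : x ∈ c) (hgx : g x = none) :
    ∃ w : List α, IsLinearSuperstring P w ∧ w.length = (c.filterMap g).length := by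
  obtain ⟨u, v, rfl⟩ := List.append_of_mem hx
  refine ⟨(v ++ u).filterMap g, ?_, ?_⟩
  · intro s hs
    obtain ⟨n, -, h⟩ := hc s hs
    have hxs : x ∉ s.map i := by
      intro hm
      obtain ⟨a, -, rfl⟩ := List.mem_map.1 hm
      simp [hg] at hgx
    have h2 := infix_power_aux (u := u) (v := v) hxs n (h.trans ⟨v, [], by simp⟩)
    have h3 := h2.filterMap g
    have h4 : (s.map i).filterMap g = s := by
      rw [List.filterMap_map]
      have : g ∘ i = some := funext hg
      rw [this, List.filterMap_some]
    rwa [h4] at h3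
  · simp [List.filterMap_cons, hgx, add_comm]

theorem empty_aux {α β : Type*} (P : Set (List α)) (c : List β) (i : α → β)
    (hc : ∀ s ∈ P, IsCircularSubstring c (s.map i)) (h : ∀ a, i a ∉ c) :
    IsLinearSuperstring P [] := by
  intro s hs
  obtain ⟨n, -, hn⟩ := hc s hs
  cases s with
  | nil => exact List.infix_rfl
  | cons a s =>
    have hm := hn.subset (show i a ∈ _ by simp)
    obtain ⟨l, hl, hal⟩ := List.mem_flatten.1 hm
    rw [List.eq_of_mem_replicate hl] at hal
    exact absurd hal (h a)

theorem length_aux {α : Type*} (c : List (α ⊕ α)) :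
    (c.filterMap Sum.getLeft?).length + (c.filterMap Sum.getRight?).length = c.length := by
  induction c with
  | nil => rfl
  | cons x c ih => cases x <;> simp [List.filterMap_cons] <;> omega

/-- From any circular superstring `c` of `f(P)` one gets a linear superstring of `P`
of length at most `|c| / 2`. -/
theorem exists_linearSuperstring_of_circularSuperstring {α : Type*} (P : Set (List α))
    (c : List (α ⊕ α)) (hc : IsCircularSuperstring (barred P) c) :
    ∃ w : List α, IsLinearSuperstring P w ∧ 2 * w.length ≤ c.length := by
  have hl : ∀ s ∈ P, IsCircularSubstring c (s.map Sum.inl) :=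
    fun s hs => hc _ (Or.inl ⟨s, hs, rfl⟩)
  have hr : ∀ s ∈ P, IsCircularSubstring c (s.map Sum.inr) :=
    fun s hs => hc _ (Or.inr ⟨s, hs, rfl⟩)
  by_cases h1 : ∀ a : α, (Sum.inl a : α ⊕ α) ∉ c
  · exact ⟨[], empty_aux P c _ hl h1, by simp⟩
  by_cases h2 : ∀ a : α, (Sum.inr a : α ⊕ α) ∉ c
  · exact ⟨[], empty_aux P c _ hr h2, by simp⟩
  push Not at h1 h2
  obtain ⟨a, ha⟩ := h1
  obtain ⟨b, hb⟩ := h2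
  obtain ⟨w, hw, hwl⟩ := one_side_aux P c Sum.inl Sum.getLeft? (fun _ => rfl) hl _ hb rfl
  obtain ⟨w', hw', hwl'⟩ := one_side_aux P c Sum.inr Sum.getRight? (fun _ => rfl) hr _ ha rfl
  have := length_aux c
  by_cases hle : w.length ≤ w'.length
  · exact ⟨w, hw, by omega⟩
  · exact ⟨w', hw', by omega⟩
end

section
/- Let w : List Σ be nonempty and set u = lift w ++ bar w : List (Σ ⊕ Σ). Then every list t that is both a prefix of u and a suffix of u and satisfies t ≠ u is the empty list. (Equivalently, u has no nonempty proper self-overlap: ov(u,u) = 0.) -/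
/-- For nonempty `w`, the string `lift w ++ bar w` has no nonempty proper self-overlap:
`ov(w w̄, w w̄) = 0`. -/
theorem no_self_overlap_lift_append_bar {α : Type*} (w : List α) (hw : w ≠ []) :
    ∀ t : List (α ⊕ α), t <+: lift w ++ bar w → t <:+ lift w ++ bar w →
      t ≠ lift w ++ bar w → t = [] := by
  rintro t ⟨a, ha⟩ ⟨b, hb⟩ hne
  by_contra h0
  have hn : 0 < w.length := List.length_pos_iff.mpr hw
  have hk : 0 < t.length := List.length_pos_iff.mpr h0
  have hlen : (lift w ++ bar w).length = w.length + w.length := by simp [lift, bar]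
  have hbl : b.length + t.length = w.length + w.length := by
    rw [← hlen, ← hb, List.length_append]
  have hbpos : 0 < b.length := by
    rcases Nat.eq_zero_or_pos b.length with h | h
    · exact absurd (by simpa [List.length_eq_zero_iff.mp h] using hb) hne
    · exact h
  have hL : ∀ i, i < w.length → ∃ x, (lift w ++ bar w)[i]? = some (Sum.inl x) := by
    intro i hi
    exact ⟨w[i], by simp [lift, bar, List.getElem?_append, hi]⟩
  have hR : ∀ i, w.length ≤ i → i < w.length + w.length →
      ∃ x, (lift w ++ bar w)[i]? = some (Sum.inr x) := by
    intro i hi hi2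
    have h3 : i - w.length < w.length := by omega
    exact ⟨w[i - w.length], by simp [lift, bar, List.getElem?_append, Nat.not_lt.mpr hi, h3]⟩
  have key : ∀ i, i < t.length →
      (lift w ++ bar w)[i]? = (lift w ++ bar w)[b.length + i]? := by
    intro i hi
    have h1 : (lift w ++ bar w)[i]? = t[i]? := by
      rw [← ha, List.getElem?_append_left hi]
    have h2 : (lift w ++ bar w)[b.length + i]? = t[i]? := by
      rw [← hb, List.getElem?_append_right (by omega), Nat.add_sub_cancel_left]
    rw [h1, h2]
  -- the last letter of `t` is barred, so `t` is longer than `w`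
  have hlong : w.length < t.length := by
    by_contra hc
    obtain ⟨x, hx⟩ := hL (t.length - 1) (by omega)
    obtain ⟨y, hy⟩ := hR (b.length + (t.length - 1)) (by omega) (by omega)
    have := key (t.length - 1) (by omega)
    rw [hx, hy] at this
    simp at this
  obtain ⟨x, hx⟩ := hL (w.length - 1) (by omega)
  obtain ⟨y, hy⟩ := hR (b.length + (w.length - 1)) (by omega) (by omega)
  have := key (w.length - 1) (by omega)
  rw [hx, hy] at this
  simp at this
end

section
/- Let P be a set of strings over Σ and let w be a linear superstring of P. Then the list u = lift w ++ bar w is a circular superstring of f(P), and u.length = 2 * w.length. Consequently, if P has a linear superstring of length k, then f(P) has a circular superstring of length 2k. -/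
/-- If `w` is a linear superstring of `P`, then `lift w ++ bar w` is a circular superstring
of `f(P)` of length `2 * |w|`. -/
theorem lift_append_bar_isCircularSuperstring {α : Type*} (P : Set (List α)) (w : List α)
    (hw : IsLinearSuperstring P w) :
    IsCircularSuperstring (barred P) (lift w ++ bar w) ∧
      (lift w ++ bar w).length = 2 * w.length := by
  refine ⟨?_, by simp [lift, bar]; omega⟩
  rintro _ (⟨s, hs, rfl⟩ | ⟨s, hs, rfl⟩)
  · refine ⟨1, le_rfl, ?_⟩
    have h : lift s <:+: lift w := (hw s hs).map Sum.inl
    simpa using h.trans (List.prefix_append (lift w) (bar w)).isInfix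
  · refine ⟨1, le_rfl, ?_⟩
    have h : bar s <:+: bar w := (hw s hs).map Sum.inr
    simpa using h.trans (List.suffix_append (lift w) (bar w)).isInfix
end

section
/- Let P be a set of strings over Σ. Suppose w₀ is a linear superstring of P of minimum length, c₀ is a circular superstring of f(P) of minimum length, and c is any circular superstring of f(P). Then there exists a linear superstring w of P such that 2 * w.length ≤ c.length and w.length * c₀.length ≤ c.length * w₀.length (i.e., the approximation ratio of w for the shortest linear superstring problem on P is at most the approximation ratio of c for the shortest circular superstring problem on f(P)). -/
/-- The barred restriction. -/
def restrictBar {α : Type*} (d : List (α ⊕ α)) : List α :=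
  d.filterMap (Sum.elim (fun _ => none) some)

theorem restrict_lift_aux {α : Type*} (s : List α) : restrict (lift s) = s := by
  induction s with
  | nil => rfl
  | cons a s ih => simpa [restrict, lift] using ih

theorem restrictBar_bar_aux {α : Type*} (s : List α) : restrictBar (bar s) = s := by
  induction s with
  | nil => rfl
  | cons a s ih => simpa [restrictBar, bar] using ih

theorem restrict_length_aux {α : Type*} (d : List (α ⊕ α)) :
    (restrict d).length + (restrictBar d).length = d.length := by
  induction d with
  | nil => rfl
  | cons a d ih =>
    rcases a with a | a <;> simp [restrict, restrictBar, List.filterMap_cons] at ih ⊢ <;> omega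

theorem rotate_pow_aux {β : Type*} (d e : List β) (n : ℕ) :
    e ++ (List.replicate n (d ++ e)).flatten ++ d = (List.replicate (n + 1) (e ++ d)).flatten := by
  induction n with
  | zero => simp
  | succ n ih =>
    rw [List.replicate_succ (n := n + 1), List.flatten_cons, ← ih, List.replicate_succ]
    simp [List.append_assoc]

theorem circ_rotate_aux {β : Type*} (d e s : List β) (h : IsCircularSubstring (d ++ e) s) :
    IsCircularSubstring (e ++ d) s := by
  obtain ⟨n, hn, h⟩ := h
  refine ⟨n + 1, by omega, ?_⟩
  rw [← rotate_pow_aux]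
  exact h.trans ⟨e, d, rfl⟩

theorem exists_first_aux {β : Type*} (p : β → Prop) (l : List β) (h : ∃ a ∈ l, p a) :
    ∃ u a v, l = u ++ a :: v ∧ p a ∧ ∀ b ∈ u, ¬ p b := by
  induction l with
  | nil => simp at h
  | cons x l ih =>
    by_cases hx : p x
    · exact ⟨[], x, l, rfl, hx, by simp⟩
    · obtain ⟨u, a, v, rfl, ha, hu⟩ := ih (by
        obtain ⟨a, ha, hp⟩ := h
        rcases List.mem_cons.1 ha with rfl | ha
        · exact absurd hp hx
        · exact ⟨a, ha, hp⟩)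
      refine ⟨x :: u, a, v, rfl, ha, ?_⟩
      intro b hb
      rcases List.mem_cons.1 hb with rfl | hb
      · exact hx
      · exact hu b hb

theorem exists_rotation_aux {α : Type*} (c : List (α ⊕ α)) (x y : α)
    (hx : Sum.inl x ∈ c) (hy : Sum.inr y ∈ c) :
    ∃ d e x' y' m, c = d ++ e ∧ e ++ d = Sum.inl x' :: (m ++ [Sum.inr y']) := by
  obtain ⟨u, a, v, rfl, ha, hu⟩ := exists_first_aux (fun z => z.isLeft = true) c ⟨_, hx, rfl⟩
  rcases a with a | a
  swap
  · simp at ha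
  rcases List.eq_nil_or_concat u with rfl | ⟨u', b, rfl⟩
  · obtain ⟨u, b, v', hr, hb, hu2⟩ := exists_first_aux (fun z => z.isRight = true)
      (Sum.inl a :: v).reverse ⟨Sum.inr y, by simpa using hy, rfl⟩
    rcases b with b | b
    · simp at hb
    have h2 : Sum.inl a :: v = (v'.reverse ++ [Sum.inr b]) ++ u.reverse := by
      have := congrArg List.reverse hr
      simpa using this
    obtain ⟨v1, h1⟩ : ∃ v1, v'.reverse = Sum.inl a :: v1 := by
      cases h : v'.reverse with
      | nil => rw [h] at h2; simp at h2
      | cons z v1 => rw [h] at h2; simp at h2; exact ⟨v1, by rw [h2.1]⟩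
    cases h3 : u.reverse with
    | nil =>
      exact ⟨v'.reverse ++ [Sum.inr b], u.reverse, a, b, v1, by simpa using h2, by simp [h3, h1]⟩
    | cons z u1 =>
      have hz : z ∈ u := by rw [← List.mem_reverse, h3]; simp
      rcases z with z | z
      · exact ⟨v'.reverse ++ [Sum.inr b], u.reverse, z, b, u1 ++ v'.reverse,
          by simpa using h2, by simp [h3]⟩
      · exact absurd rfl (hu2 _ hz)
  · rcases b with b | b
    · exact absurd rfl (hu (Sum.inl b) (by simp))
    · exact ⟨u' ++ [Sum.inr b], Sum.inl a :: v, a, b, v ++ u', by simp, by simp⟩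

theorem infix_append_aux {β : Type*} (s a b : List β) (h : s <:+: a ++ b) :
    s <:+: a ∨ s <:+: b ∨
      ∃ s1 s2, s = s1 ++ s2 ∧ s1 ≠ [] ∧ s2 ≠ [] ∧ s1 <:+ a ∧ s2 <+: b := by
  obtain ⟨p, q, h⟩ := h
  rw [List.append_assoc, List.append_eq_append_iff] at h
  rcases h with ⟨r, rfl, h⟩ | ⟨r, rfl, rfl⟩
  · rw [List.append_eq_append_iff] at h
    rcases h with ⟨t, rfl, rfl⟩ | ⟨t, rfl, rfl⟩
    · exact Or.inl ⟨p, t, by simp⟩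
    · by_cases hr : r = []
      · subst hr; exact Or.inr (Or.inl ⟨[], q, by simp⟩)
      by_cases ht : t = []
      · subst ht; exact Or.inl ⟨p, [], by simp⟩
      exact Or.inr (Or.inr ⟨r, t, rfl, hr, ht, ⟨p, rfl⟩, ⟨q, rfl⟩⟩)
  · exact Or.inr (Or.inl ⟨r, q, by simp⟩)

theorem circ_infix_aux {α : Type*} (x y : α) (m t : List (α ⊕ α))
    (ht : (∀ a, Sum.inl a ∉ t) ∨ (∀ a, Sum.inr a ∉ t))
    (h : IsCircularSubstring (Sum.inl x :: (m ++ [Sum.inr y])) t) :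
    t <:+: Sum.inl x :: (m ++ [Sum.inr y]) := by
  obtain ⟨n, -, h⟩ := h
  induction n with
  | zero =>
    have : t = [] := by simpa using h
    subst this
    exact List.nil_infix
  | succ n ih =>
    rw [List.replicate_succ, List.flatten_cons] at h
    rcases infix_append_aux _ _ _ h with h | h | ⟨s1, s2, rfl, h1, h2, hs, hp⟩
    · exact h
    · exact ih h
    · exfalso
      rcases ht with ht | ht
      · cases n with
        | zero => simp at hp; exact h2 hp
        | succ n =>
          cases s2 with
          | nil => exact h2 rfl
          | cons z s2 =>
            rw [List.replicate_succ, List.flatten_cons, List.cons_append,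
              List.cons_prefix_cons] at hp
            exact ht x (by simp [hp.1])
      · rcases List.eq_nil_or_concat s1 with rfl | ⟨s1, z, rfl⟩
        · exact h1 rfl
        · obtain ⟨q, hq⟩ := hs
          have hq' : (q ++ s1) ++ [z] = (Sum.inl x :: m) ++ [Sum.inr y] := by simpa using hq
          have := (List.append_inj' hq' rfl).2
          simp at this
          exact ht y (by simp [this])

theorem mem_circ_aux {β : Type*} (c t : List β) (h : IsCircularSubstring c t) (a : β)
    (ha : a ∈ t) : a ∈ c := by
  obtain ⟨n, -, h⟩ := h
  have := h.subset ha
  simp at this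
  exact this.2

theorem two_mul_le_aux {α : Type*} (P : Set (List α))
    (w₀ : List α)
    (hw₀min : ∀ w : List α, IsLinearSuperstring P w → w₀.length ≤ w.length)
    (c : List (α ⊕ α)) (hc : IsCircularSuperstring (barred P) c) :
    2 * w₀.length ≤ c.length := by
  by_cases hP : ∀ s ∈ P, s = []
  · have := hw₀min [] (fun s hs => by rw [hP s hs])
    simp at this
    simp [this]
  · push Not at hP
    obtain ⟨s, hs, hne⟩ := hP
    obtain ⟨a, ha⟩ := List.exists_mem_of_ne_nil s hne
    have hl : ∀ s ∈ P, IsCircularSubstring c (lift s) := fun s hs => hc _ (Or.inl ⟨s, hs, rfl⟩)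
    have hb : ∀ s ∈ P, IsCircularSubstring c (bar s) := fun s hs => hc _ (Or.inr ⟨s, hs, rfl⟩)
    obtain ⟨d, e, x, y, m, rfl, hde⟩ := exists_rotation_aux c a a
      (mem_circ_aux _ _ (hl s hs) _ (by simpa [lift] using ha))
      (mem_circ_aux _ _ (hb s hs) _ (by simpa [bar] using ha))
    have h1 := hw₀min (restrict (e ++ d)) (fun s hs => by
      have h := circ_rotate_aux _ _ _ (hl s hs)
      rw [hde] at h
      have := (circ_infix_aux _ _ _ _ (Or.inr (by simp [lift])) h)
      rw [← hde] at this
      rw [← restrict_lift_aux s]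
      exact this.filterMap _)
    have h2 := hw₀min (restrictBar (e ++ d)) (fun s hs => by
      have h := circ_rotate_aux _ _ _ (hb s hs)
      rw [hde] at h
      have := (circ_infix_aux _ _ _ _ (Or.inl (by simp [bar])) h)
      rw [← hde] at this
      rw [← restrictBar_bar_aux s]
      exact this.filterMap _)
    have h3 := restrict_length_aux (e ++ d)
    simp only [List.length_append] at h3 ⊢
    omega

/-- Strict-reduction inequality for the length measure: from a circular superstring `c` of
`f(P)` one obtains a linear superstring `w` of `P` whose approximation ratio for SLS on `P`
is at most the approximation ratio of `c` for SCS on `f(P)`. -/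
theorem strict_reduction_length_measure {α : Type*} (P : Set (List α))
    (w₀ : List α) (hw₀ : IsLinearSuperstring P w₀)
    (hw₀min : ∀ w : List α, IsLinearSuperstring P w → w₀.length ≤ w.length)
    (c₀ : List (α ⊕ α)) (hc₀ : IsCircularSuperstring (barred P) c₀)
    (hc₀min : ∀ c' : List (α ⊕ α), IsCircularSuperstring (barred P) c' → c₀.length ≤ c'.length)
    (c : List (α ⊕ α)) (hc : IsCircularSuperstring (barred P) c) :
    ∃ w : List α, IsLinearSuperstring P w ∧ 2 * w.length ≤ c.length ∧
      w.length * c₀.length ≤ c.length * w₀.length := by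
  have h := two_mul_le_aux P w₀ hw₀min c hc
  have h0 := hc₀min (lift w₀ ++ bar w₀) (by
    rintro t (⟨s, hs, rfl⟩ | ⟨s, hs, rfl⟩)
    · refine ⟨1, le_rfl, ?_⟩
      have : lift s <:+: lift w₀ := (hw₀ s hs).map _
      simpa using this.trans ⟨[], bar w₀, by simp⟩
    · refine ⟨1, le_rfl, ?_⟩
      have : bar s <:+: bar w₀ := (hw₀ s hs).map _
      simpa using this.trans ⟨lift w₀, [], by simp⟩)
  simp [lift, bar] at h0
  refine ⟨w₀, hw₀, h, ?_⟩
  rw [Nat.mul_comm]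
  exact Nat.mul_le_mul_right _ (by omega)
end

section
/- Let P be a finite set of nonempty strings over Σ such that no string of P is an infix of another string of P, and let F be the finite set f(P) = {lift s | s ∈ P} ∪ {bar s | s ∈ P} over Σ ⊕ Σ. If w is a greedy linear superstring of F (GreedySup F w), then w has no nonempty proper self-overlap: every list t that is both a prefix of w and a suffix of w with t ≠ w is the empty list (i.e., ov(w,w) = 0). -/
/-- `ov x y`: the maximum length of a list that is simultaneously a proper suffix of `x`
and a proper prefix of `y`. -/
def ov {α : Type*} [DecidableEq α] (x y : List α) : ℕ :=
  Nat.findGreatest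
    (fun k => k < x.length ∧ k < y.length ∧ x.drop (x.length - k) = y.take k)
    (min x.length y.length)

/-- `merge x y = x ⊙ y`, the merge of `x` onto `y` along their longest overlap. -/
def merge {α : Type*} [DecidableEq α] (x y : List α) : List α := x ++ y.drop (ov x y)

/-- `GreedySup Q z`: `z` is a possible output of the greedy superstring algorithm on the
finite set `Q` of strings. -/
inductive GreedySup {α : Type*} [DecidableEq α] : Finset (List α) → List α → Prop
  | single (w : List α) : GreedySup {w} w
  | step {Q : Finset (List α)} {z : List α} (u v : List α) (hu : u ∈ Q) (hv : v ∈ Q)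
      (hne : u ≠ v) (hmax : ∀ x ∈ Q, ∀ y ∈ Q, x ≠ y → ov x y ≤ ov u v)
      (hrec : GreedySup ((Q \ {u, v}) ∪ {merge u v}) z) : GreedySup Q z

theorem ov_ge {α : Type*} [DecidableEq α] (a t b : List α) (ha : a ≠ []) (hb : b ≠ []) :
    t.length ≤ ov (a ++ t) (t ++ b) := by
  have ha' := List.length_pos_iff.2 ha
  have hb' := List.length_pos_iff.2 hb
  unfold ov
  apply Nat.le_findGreatest
  · simp
  · simp
    exact ⟨ha', hb'⟩

theorem ov_spec {α : Type*} [DecidableEq α] (x y : List α) :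
    ∃ a t b, x = a ++ t ∧ y = t ++ b ∧ t.length = ov x y ∧ merge x y = a ++ t ++ b := by
  have key : ov x y ≤ x.length ∧ ov x y ≤ y.length ∧
      x.drop (x.length - ov x y) = y.take (ov x y) := by
    by_cases h : ov x y = 0
    · simp [h]
    · have := Nat.findGreatest_of_ne_zero (n := min x.length y.length) (m := ov x y) rfl h
      exact ⟨this.1.le, this.2.1.le, this.2.2⟩
  obtain ⟨h1, h2, h3⟩ := key
  refine ⟨x.take (x.length - ov x y), y.take (ov x y), y.drop (ov x y), ?_, ?_, ?_, ?_⟩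
  · rw [← h3, List.take_append_drop]
  · rw [List.take_append_drop]
  · simp [h2]
  · rw [← h3, List.take_append_drop, merge]

theorem ov_pos_of_infix {α : Type*} [DecidableEq α] (a t b s : List α)
    (h : s <:+: a ++ t ++ b) (h1 : ¬ s <:+: a ++ t) (h2 : ¬ s <:+: t ++ b)
    (h3 : ¬ a ++ t <:+: s) : t.length < ov (a ++ t) s := by
  obtain ⟨p, q, h⟩ := h
  rw [List.append_assoc, List.append_assoc, List.append_eq_append_iff] at h
  rcases h with ⟨a', rfl, h⟩ | ⟨a', rfl, h⟩
  · rw [← List.append_assoc, List.append_eq_append_iff] at h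
    rcases h with ⟨c, h, h'⟩ | ⟨c, rfl, h'⟩
    · exact absurd ⟨p, c, by simp [h]⟩ h1
    · have hp : p ≠ [] := by
        rintro rfl
        exact h3 ⟨[], c, by simp⟩
      have hc : c ≠ [] := by
        rintro rfl
        exact h1 ⟨p, [], by simp⟩
      have ha : a' ≠ [] := by
        rintro rfl
        exact h2 ⟨[], q, by simp [h']⟩
      have := ov_ge p (a' ++ t) c hp hc
      have ha' := List.length_pos_iff.2 ha
      simp only [List.length_append, List.append_assoc] at this ⊢
      omega
  · exact absurd ⟨a', q, by simp [h]⟩ h2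

/-- Pairwise infix-freeness. -/
def InfFree {α : Type*} (Q : Finset (List α)) : Prop :=
  ∀ x ∈ Q, ∀ y ∈ Q, x ≠ y → ¬ x <:+: y

theorem infFree_step {α : Type*} [DecidableEq α] {Q : Finset (List α)} (hQ : InfFree Q)
    {u v : List α} (hu : u ∈ Q) (hv : v ∈ Q)
    (hmax : ∀ x ∈ Q, ∀ y ∈ Q, x ≠ y → ov x y ≤ ov u v) :
    InfFree ((Q \ {u, v}) ∪ {merge u v}) := by
  obtain ⟨a, t, b, ha, hb, ht, hm⟩ := ov_spec u v
  intro x hx y hy hxy hi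
  simp only [Finset.mem_union, Finset.mem_sdiff, Finset.mem_insert, Finset.mem_singleton,
    not_or] at hx hy
  rcases hx with ⟨hx, hxu, hxv⟩ | rfl
  · rcases hy with ⟨hy, hyu, hyv⟩ | rfl
    · exact hQ x hx y hy hxy hi
    · have := ov_pos_of_infix a t b x (hm ▸ hi) (ha ▸ hQ x hx u hu hxu)
        (hb ▸ hQ x hx v hv hxv) (ha ▸ hQ u hu x hx (Ne.symm hxu))
      rw [← ha, ht] at this
      have h2 := hmax u hu x hx (Ne.symm hxu)
      omega
  · rcases hy with ⟨hy, hyu, hyv⟩ | rfl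
    · refine hQ u hu y hy (Ne.symm hyu) (List.IsInfix.trans ⟨[], b, ?_⟩ hi)
      rw [hm, ← ha]; simp
    · exact hxy rfl

theorem unbordered_append {α : Type*} [DecidableEq α] {u v : List α}
    (h1 : ov u v = 0) (h2 : ov v u = 0) (huv : ¬ u <:+: v) (hvu : ¬ v <:+: u) :
    ∀ t : List α, t <+: u ++ v → t <:+ u ++ v → t ≠ u ++ v → t = [] := by
  rintro t ⟨c, hc⟩ ⟨d, hd⟩ hne
  have hc0 : c ≠ [] := by rintro rfl; simp at hc; exact hne hc
  have hd0 : d ≠ [] := by rintro rfl; simp at hd; exact hne hd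
  rw [List.append_eq_append_iff] at hc hd
  rcases hc with ⟨e, rfl, rfl⟩ | ⟨e, rfl, rfl⟩
  · rcases hd with ⟨g, hg, rfl⟩ | ⟨g, rfl, rfl⟩
    · exact absurd ⟨g, e, rfl⟩ hvu
    · have he : e ≠ [] := by rintro rfl; exact huv ⟨g, [], by simp⟩
      have hg : g ≠ [] := by rintro rfl; exact hvu ⟨[], e, by simp⟩
      have := ov_ge g t e hg he
      rw [h2] at this
      exact List.length_eq_zero_iff.1 (by omega)
  · rcases hd with ⟨g, rfl, hg⟩ | ⟨g, rfl, hg⟩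
    · have hg' := hg
      rw [List.append_eq_append_iff] at hg
      rcases hg with ⟨h, hh, he⟩ | ⟨h, hh, he⟩
      · have := congrArg List.length hh
        have hd' := List.length_pos_iff.2 hd0
        simp only [List.length_append] at this
        omega
      · have hg0 : g ≠ [] := by
          rintro rfl
          exact huv ⟨[], e, by simpa using hg'⟩
        have he0 : e ≠ [] := by
          rintro rfl
          exact hvu ⟨g, [], by simpa using hg'.symm⟩
        have := ov_ge g h e hg0 he0
        rw [← hh, ← he, h1] at this
        have hl : h = [] := List.length_eq_zero_iff.1 (by omega)
        subst hl
        have := congrArg List.length he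
        have hc' := List.length_pos_iff.2 hc0
        simp only [List.length_append, List.length_nil] at this
        omega
    · exact absurd ⟨g, e, by simp [hg]⟩ huv

theorem ov_append_left {α : Type*} [DecidableEq α] {u v x : List α}
    (h : ov v x = 0) (hvx : ¬ v <:+: x) (hxv : ¬ x <:+: v) : ov (u ++ v) x = 0 := by
  obtain ⟨a, t, b, ha, rfl, ht, -⟩ := ov_spec (u ++ v) x
  rw [← ht]
  rw [List.append_eq_append_iff] at ha
  rcases ha with ⟨g, rfl, rfl⟩ | ⟨g, rfl, rfl⟩
  · have hg : g ≠ [] := by rintro rfl; exact hvx ⟨[], b, by simp⟩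
    have hb : b ≠ [] := by rintro rfl; exact hxv ⟨g, [], by simp⟩
    have := ov_ge g t b hg hb
    omega
  · exact absurd ⟨g, b, by simp⟩ hvx

theorem ov_append_right {α : Type*} [DecidableEq α] {u v x : List α}
    (h : ov x u = 0) (hux : ¬ u <:+: x) (hxu : ¬ x <:+: u) : ov x (u ++ v) = 0 := by
  obtain ⟨a, t, b, rfl, ha, ht, -⟩ := ov_spec x (u ++ v)
  rw [← ht]
  rw [List.append_eq_append_iff] at ha
  rcases ha with ⟨g, rfl, rfl⟩ | ⟨g, rfl, rfl⟩
  · exact absurd ⟨a, g, by simp⟩ hux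
  · have hg : g ≠ [] := by rintro rfl; exact hux ⟨a, [], by simp⟩
    have ha : a ≠ [] := by rintro rfl; exact hxu ⟨[], g, by simp⟩
    have := ov_ge a t g ha hg
    omega

theorem greedy_zero {α : Type*} [DecidableEq α] {Q : Finset (List α)} {z : List α}
    (h : GreedySup Q z) (hQ : InfFree Q) (h0 : ∀ x ∈ Q, ∀ y ∈ Q, x ≠ y → ov x y = 0)
    (hs : ∀ w, Q = {w} → ∀ t : List α, t <+: w → t <:+ w → t ≠ w → t = []) :
    ∀ t : List α, t <+: z → t <:+ z → t ≠ z → t = [] := by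
  induction h with
  | single w => exact hs w rfl
  | @step Q z u v hu hv hne hmax hrec ih =>
    have hm : merge u v = u ++ v := by simp [merge, h0 u hu v hv hne]
    apply ih (infFree_step hQ hu hv hmax)
    · rw [hm]
      intro x hx y hy hxy
      simp only [Finset.mem_union, Finset.mem_sdiff, Finset.mem_insert, Finset.mem_singleton,
        not_or] at hx hy
      rcases hx with ⟨hx, hxu, hxv⟩ | rfl
      · rcases hy with ⟨hy, hyu, hyv⟩ | rfl
        · exact h0 x hx y hy hxy
        · exact ov_append_right (h0 x hx u hu hxu) (hQ u hu x hx (Ne.symm hxu))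
            (hQ x hx u hu hxu)
      · rcases hy with ⟨hy, hyu, hyv⟩ | rfl
        · exact ov_append_left (h0 v hv y hy (Ne.symm hyv)) (hQ v hv y hy (Ne.symm hyv))
            (hQ y hy v hv hyv)
        · exact absurd rfl hxy
    · intro w hw
      have : merge u v ∈ ({w} : Finset (List α)) := by rw [← hw]; simp
      rw [Finset.mem_singleton] at this
      rw [← this, hm]
      exact unbordered_append (h0 u hu v hv hne) (h0 v hv u hu hne.symm)
        (hQ u hu v hv hne) (hQ v hv u hu hne.symm)

/-- Nonempty, and every letter has side `b`. -/
def PureSide {α : Type*} (b : Bool) (x : List (α ⊕ α)) : Prop :=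
  x ≠ [] ∧ ∀ c ∈ x, c.isLeft = b

theorem merge_pure {α : Type*} [DecidableEq α] {b : Bool} {u v : List (α ⊕ α)}
    (hu : PureSide b u) (hv : PureSide b v) : PureSide b (merge u v) := by
  refine ⟨by simp [merge, hu.1], fun c hc => ?_⟩
  rw [merge, List.mem_append] at hc
  exact hc.elim (hu.2 c) (fun h => hv.2 c (List.mem_of_mem_drop h))

theorem pure_unique {α : Type*} {b b' : Bool} {u : List (α ⊕ α)}
    (hu : PureSide b u) (hv : PureSide b' u) : b = b' := by
  obtain ⟨c, hc⟩ := List.exists_mem_of_ne_nil _ hu.1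
  rw [← hu.2 c hc, ← hv.2 c hc]

theorem greedy_pure {α : Type*} [DecidableEq α] {Q : Finset (List (α ⊕ α))} {z : List (α ⊕ α)}
    (h : GreedySup Q z) (hQ : InfFree Q) (hp : ∀ x ∈ Q, ∃ b, PureSide b x)
    (hb : ∀ b, ∃ x ∈ Q, PureSide b x) :
    ∀ t : List (α ⊕ α), t <+: z → t <:+ z → t ≠ z → t = [] := by
  induction h with
  | single w =>
    obtain ⟨x, hx, hx'⟩ := hb true
    obtain ⟨y, hy, hy'⟩ := hb false
    rw [Finset.mem_singleton] at hx hy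
    subst hx hy
    exact absurd (pure_unique hx' hy') (by simp)
  | @step Q z u v hu hv hne hmax hrec ih =>
    by_cases h0 : ov u v = 0
    · refine greedy_zero (GreedySup.step u v hu hv hne hmax hrec) hQ ?_ ?_
      · intro x hx y hy hxy
        have := hmax x hx y hy hxy
        omega
      · rintro w rfl
        rw [Finset.mem_singleton] at hu hv
        exact absurd (hu.trans hv.symm) hne
    · obtain ⟨b, hub⟩ := hp u hu
      obtain ⟨b', hvb⟩ := hp v hv
      have hbb : b = b' := by
        obtain ⟨a, t, d, rfl, rfl, ht, -⟩ := ov_spec u v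
        have ht0 : t ≠ [] := by rintro rfl; exact h0 ht.symm
        obtain ⟨c, hc⟩ := List.exists_mem_of_ne_nil _ ht0
        rw [← hub.2 c (by simp [hc]), ← hvb.2 c (by simp [hc])]
      subst hbb
      have hm := merge_pure hub hvb
      apply ih (infFree_step hQ hu hv hmax)
      · intro x hx
        simp only [Finset.mem_union, Finset.mem_sdiff, Finset.mem_singleton] at hx
        rcases hx with hx | rfl
        · exact hp x hx.1
        · exact ⟨b, hm⟩
      · intro b'
        by_cases hbb : b = b'
        · subst hbb
          exact ⟨_, by simp, hm⟩
        · obtain ⟨x, hx, hx'⟩ := hb b'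
          refine ⟨x, ?_, hx'⟩
          have h1 : x ≠ u := by rintro rfl; exact hbb (pure_unique hub hx')
          have h2 : x ≠ v := by rintro rfl; exact hbb (pure_unique hvb hx')
          simp [hx, h1, h2]

theorem map_infix_of_inj {α β : Type*} {f : α → β} (hf : Function.Injective f) {s t : List α}
    (h : s.map f <:+: t.map f) : s <:+: t := by
  obtain ⟨p, q, h⟩ := h
  obtain ⟨l, q', rfl, h, -⟩ := List.map_eq_append_iff.1 h.symm
  obtain ⟨p', s', rfl, -, h⟩ := List.map_eq_append_iff.1 h
  rw [List.map_injective_iff.2 hf h]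
  exact ⟨p', q', rfl⟩

theorem not_infix_of_pure {α : Type*} {b b' : Bool} (hb : b ≠ b') {u v : List (α ⊕ α)}
    (hu : PureSide b u) (hv : PureSide b' v) : ¬ u <:+: v := fun h =>
  hb (pure_unique hu ⟨hu.1, fun c hc => hv.2 c (h.subset hc)⟩)

/-- A greedy linear superstring of `f(P)` has no nonempty proper self-overlap. -/
theorem greedySup_barred_no_self_overlap {α : Type*} [DecidableEq α] (P : Finset (List α))
    (hne : ∀ s ∈ P, s ≠ ([] : List α))
    (hinf : ∀ s ∈ P, ∀ t ∈ P, s ≠ t → ¬ s <:+: t)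
    (w : List (α ⊕ α)) (hw : GreedySup (P.image lift ∪ P.image bar) w) :
    ∀ t : List (α ⊕ α), t <+: w → t <:+ w → t ≠ w → t = [] := by
  have hl : ∀ s ∈ P, PureSide true (lift s) := fun s hs =>
    ⟨by simpa [lift] using hne s hs, by simp [lift]⟩
  have hr : ∀ s ∈ P, PureSide false (bar s) := fun s hs =>
    ⟨by simpa [bar] using hne s hs, by simp [bar]⟩
  rcases P.eq_empty_or_nonempty with rfl | ⟨s₀, hs₀⟩
  · exfalso
    generalize hQ : (∅ : Finset (List α)).image lift ∪ (∅ : Finset (List α)).image bar = Q at hw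
    cases hw with
    | single => exact absurd hQ.symm (by simp)
    | step u v hu => subst hQ; simp at hu
  apply greedy_pure hw
  · intro x hx y hy hxy hi
    simp only [Finset.mem_union, Finset.mem_image] at hx hy
    rcases hx with ⟨s, hs, rfl⟩ | ⟨s, hs, rfl⟩ <;> rcases hy with ⟨t, ht, rfl⟩ | ⟨t, ht, rfl⟩
    · exact hinf s hs t ht (fun h => hxy (h ▸ rfl)) (map_infix_of_inj Sum.inl_injective hi)
    · exact not_infix_of_pure (by simp) (hl s hs) (hr t ht) hi
    · exact not_infix_of_pure (by simp) (hr s hs) (hl t ht) hi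
    · exact hinf s hs t ht (fun h => hxy (h ▸ rfl)) (map_infix_of_inj Sum.inr_injective hi)
  · intro x hx
    simp only [Finset.mem_union, Finset.mem_image] at hx
    rcases hx with ⟨s, hs, rfl⟩ | ⟨s, hs, rfl⟩
    · exact ⟨_, hl s hs⟩
    · exact ⟨_, hr s hs⟩
  · intro b
    cases b
    · exact ⟨bar s₀, Finset.mem_union_right _ (Finset.mem_image_of_mem _ hs₀), hr s₀ hs₀⟩
    · exact ⟨lift s₀, Finset.mem_union_left _ (Finset.mem_image_of_mem _ hs₀), hl s₀ hs₀⟩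
end

section
/- Let P be a finite set of nonempty strings over Σ such that no string of P is an infix of another string of P, and let F be the finite set f(P) = {lift s | s ∈ P} ∪ {bar s | s ∈ P} over Σ ⊕ Σ. If w is a greedy linear superstring of F (GreedySup F w), then the Σ-restriction of w is a greedy linear superstring of P (GreedySup P (Σ-restriction of w)). -/
namespace RG

def Good {β : Type*} (Q : Finset (List β)) : Prop :=
  (∀ s ∈ Q, s ≠ []) ∧ ∀ s ∈ Q, ∀ t ∈ Q, s ≠ t → ¬ s <:+: t

def Zero {β : Type*} [DecidableEq β] (Q : Finset (List β)) : Prop :=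
  ∀ x ∈ Q, ∀ y ∈ Q, x ≠ y → ov x y = 0

theorem le_ov {β : Type*} [DecidableEq β] (p s t : List β) (hp : p ≠ []) (ht : t ≠ []) :
    s.length ≤ ov (p ++ s) (s ++ t) := by
  have hp' := List.length_pos_iff.2 hp
  have ht' := List.length_pos_iff.2 ht
  apply Nat.le_findGreatest
  · simp
  · refine ⟨by simp; omega, by simp; omega, ?_⟩
    simp

theorem ov_spec {β : Type*} [DecidableEq β] (x y : List β) (hx : x ≠ []) (hy : y ≠ []) :
    ∃ p s t, p ≠ [] ∧ t ≠ [] ∧ x = p ++ s ∧ y = s ++ t ∧ s.length = ov x y := by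
  have hx' := List.length_pos_iff.2 hx
  have hy' := List.length_pos_iff.2 hy
  have h := Nat.findGreatest_spec (P := fun k => k < x.length ∧ k < y.length ∧
    x.drop (x.length - k) = y.take k) (m := 0) (n := min x.length y.length) (Nat.zero_le _)
    ⟨hx', hy', by simp⟩
  obtain ⟨h1, h2, h3⟩ := h
  change ov x y < _ at h1
  change ov x y < _ at h2
  change x.drop (x.length - ov x y) = y.take (ov x y) at h3
  refine ⟨x.take (x.length - ov x y), y.take (ov x y), y.drop (ov x y), ?_, ?_, ?_, ?_, ?_⟩
  · apply List.ne_nil_of_length_pos; simp; omega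
  · apply List.ne_nil_of_length_pos; simp; omega
  · rw [← h3]; simp
  · simp
  · simp; omega

theorem ov_map {α β : Type*} [DecidableEq α] [DecidableEq β] (f : α → β)
    (hf : Function.Injective f) (x y : List α) : ov (x.map f) (y.map f) = ov x y := by
  simp [ov, ← List.map_drop, ← List.map_take, (List.map_injective_iff.2 hf).eq_iff]

theorem merge_map {α β : Type*} [DecidableEq α] [DecidableEq β] (f : α → β)
    (hf : Function.Injective f) (x y : List α) :
    merge (x.map f) (y.map f) = (merge x y).map f := by
  simp [merge, ov_map f hf, List.map_drop]

theorem merge_zero {β : Type*} [DecidableEq β] {x y : List β} (h : ov x y = 0) :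
    merge x y = x ++ y := by simp [merge, h]

theorem substr_merge_right {β : Type*} [DecidableEq β] (u v : List β) (hu : u ≠ []) (hv : v ≠ []) :
    v <:+: merge u v := by
  obtain ⟨p, s, t, hp, ht, e1, e2, e3⟩ := ov_spec u v hu hv
  have : merge u v = p ++ v := by
    unfold merge
    rw [← e3]
    rw [e1, e2]; simp
  rw [this]
  exact (List.suffix_append p v).isInfix

theorem substr_merge_left {β : Type*} [DecidableEq β] (u v : List β) :
    u <:+: merge u v := (List.prefix_append _ _).isInfix

/-- An infix of a merge is an infix of a side or witnesses a bigger overlap. -/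
theorem substr_merge {β : Type*} [DecidableEq β] (u v t : List β) (hu : u ≠ []) (hv : v ≠ [])
    (h : t <:+: merge u v) (h1 : ¬ t <:+: u) (h2 : ¬ t <:+: v) (h3 : ¬ u <:+: t) :
    ov u v < ov u t := by
  obtain ⟨p, s, q, hp, hq, e1, e2, e3⟩ := ov_spec u v hu hv
  have hm : merge u v = p ++ v := by
    unfold merge
    rw [← e3]
    rw [e1, e2]; simp
  have hm' : merge u v = u ++ q := by rw [hm, e1, e2]; simp
  obtain ⟨a, b, hab⟩ := h
  have ha : a.length < p.length := by
    by_contra hlt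
    push Not at hlt
    apply h2
    rw [hm, List.append_assoc, List.append_eq_append_iff] at hab
    rcases hab with ⟨c, hc, hc'⟩ | ⟨c, hc, hc'⟩
    · have : c = [] := by
        rw [hc] at hlt; simp at hlt; exact hlt
      subst this
      exact ⟨[], b, by simpa using hc'⟩
    · exact ⟨c, b, by simp [hc']⟩
  rw [hm', List.append_eq_append_iff] at hab
  rcases hab with ⟨c, hc, hc'⟩ | ⟨c, hc, hc'⟩
  · exact absurd ⟨a, c, hc.symm⟩ h1
  · rw [List.append_eq_append_iff] at hc
    rcases hc with ⟨d, hd, hd'⟩ | ⟨d, hd, hd'⟩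
    · have hne : a ≠ [] := by
        rintro rfl
        simp at hd
        exact h3 ⟨[], c, by simp [hd', hd]⟩
      have hcn : c ≠ [] := by
        rintro rfl
        exact h1 ⟨a, [], by simp at hd'; simp [hd, hd']⟩
      have := le_ov a d c hne hcn
      rw [← hd, ← hd'] at this
      have hl : d.length > s.length := by
        have := congrArg List.length hd
        rw [e1] at this
        simp at this
        omega
      omega
    · have := congrArg List.length hd
      rw [e1] at this
      simp at this
      omega

theorem Good.step {β : Type*} [DecidableEq β] {Q : Finset (List β)} (hQ : Good Q) {u v : List β}
    (hu : u ∈ Q) (hv : v ∈ Q)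
    (hmax : ∀ x ∈ Q, ∀ y ∈ Q, x ≠ y → ov x y ≤ ov u v) :
    Good ((Q \ {u, v}) ∪ {merge u v}) := by
  have hu0 := hQ.1 u hu
  have hv0 := hQ.1 v hv
  constructor
  · intro s hs
    simp at hs
    rcases hs with rfl | hs
    · simp [merge, hu0]
    · exact hQ.1 s hs.1
  · intro s hs t ht hst hin
    simp at hs ht
    rcases hs with rfl | ⟨hs, hsu, hsv⟩ <;> rcases ht with rfl | ⟨ht, htu, htv⟩
    · exact hst rfl
    · exact hQ.2 u hu t ht (Ne.symm htu) ((substr_merge_left u v).trans hin)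
    · have := substr_merge u v s hu0 hv0 hin (hQ.2 s hs u hu hsu) (hQ.2 s hs v hv hsv)
        (hQ.2 u hu s hs (Ne.symm hsu))
      have := hmax u hu s hs (Ne.symm hsu)
      omega
    · exact hQ.2 s hs t ht hst hin

theorem merge_notMem {β : Type*} [DecidableEq β] {Q : Finset (List β)} (hQ : Good Q) {u v : List β}
    (hu : u ∈ Q) : merge u v ∉ Q \ {u, v} := by
  intro h
  simp at h
  exact hQ.2 u hu _ h.1 (Ne.symm h.2.1) (substr_merge_left u v)

theorem Zero.step {β : Type*} [DecidableEq β] {Q : Finset (List β)} (hQ : Good Q) (hZ : Zero Q)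
    {u v : List β} (hu : u ∈ Q) (hv : v ∈ Q) (huv : u ≠ v) :
    Zero ((Q \ {u, v}) ∪ {merge u v}) := by
  have hu0 := hQ.1 u hu
  have hv0 := hQ.1 v hv
  rw [merge_zero (hZ u hu v hv huv)]
  intro x hx y hy hxy
  simp at hx hy
  rcases hx with rfl | ⟨hx, hxu, hxv⟩ <;> rcases hy with rfl | ⟨hy, hyu, hyv⟩
  · exact absurd rfl hxy
  · obtain ⟨p, s, t, hp, ht, e1, e2, e3⟩ := ov_spec (u ++ v) y (by simp [hu0]) (hQ.1 y hy)
    rw [← e3]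
    by_contra hs
    rw [List.append_eq_append_iff] at e1
    rcases e1 with ⟨c, hc, hc'⟩ | ⟨c, hc, hc'⟩
    · rcases eq_or_ne c [] with rfl | hcn
      · exact hQ.2 v hv y hy (Ne.symm hyv) ⟨[], t, by simp [hc', e2]⟩
      · have := le_ov c s t hcn ht
        rw [← hc', ← e2, hZ v hv y hy (Ne.symm hyv)] at this
        omega
    · exact hQ.2 v hv y hy (Ne.symm hyv) ⟨c, t, by simp [hc', e2]⟩
  · obtain ⟨p, s, t, hp, ht, e1, e2, e3⟩ := ov_spec x (u ++ v) (hQ.1 x hx) (by simp [hu0])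
    rw [← e3]
    by_contra hs
    rw [List.append_eq_append_iff] at e2
    rcases e2 with ⟨c, hc, hc'⟩ | ⟨c, hc, hc'⟩
    · exact hQ.2 u hu x hx (Ne.symm hxu) ⟨p, c, by simp [hc, e1]⟩
    · rcases eq_or_ne c [] with rfl | hcn
      · exact hQ.2 u hu x hx (Ne.symm hxu) ⟨p, [], by simp at hc; simp [hc, e1]⟩
      · have := le_ov p s c hp hcn
        rw [← hc, ← e1, hZ x hx u hu hxu] at this
        omega
  · exact hZ x hx y hy hxy

theorem zero_list {β : Type*} [DecidableEq β] {Q : Finset (List β)} {z : List β}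
    (h : GreedySup Q z) : Good Q → Zero Q → ∃ l : List (List β), l.Nodup ∧ l.toFinset = Q ∧
      z = l.flatten := by
  induction h with
  | single w => intro _ _; exact ⟨[w], by simp⟩
  | @step Q z u v hu hv hne hmax hrec ih =>
    intro hG hZ
    obtain ⟨l, hl, hlQ, rfl⟩ := ih (hG.step hu hv hmax) (hZ.step hG hu hv hne)
    have hnm := merge_notMem (v := v) hG hu
    have hmem : merge u v ∈ l := by
      rw [← List.mem_toFinset, hlQ]; simp
    obtain ⟨a, b, rfl⟩ := List.append_of_mem hmem
    have hm : ∀ x, x ∈ a ∨ x ∈ b ↔ x ∈ Q ∧ x ≠ u ∧ x ≠ v := by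
      intro x
      have h1 := Finset.ext_iff.1 hlQ x
      have h2 : merge u v ∉ a ∧ merge u v ∉ b := by
        simp [List.nodup_append, List.nodup_cons] at hl
        exact ⟨fun h => by grind, by grind⟩
      simp at h1 hnm
      by_cases hx : x = merge u v
      · subst hx
        constructor
        · intro h; grind
        · intro h; grind
      · grind
    refine ⟨a ++ u :: v :: b, ?_, ?_, ?_⟩
    · have h1 := hm u
      have h2 := hm v
      simp at h1 h2
      simp [List.nodup_append, List.nodup_cons] at hl ⊢
      grind
    · ext x
      have := hm x
      simp
      grind
    · simp [merge_zero (hZ u hu v hv hne)]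

theorem list_zero {β : Type*} [DecidableEq β] (n : ℕ) : ∀ (l : List (List β)), l.length = n + 1 →
    l.Nodup → Good l.toFinset → Zero l.toFinset → GreedySup l.toFinset l.flatten := by
  induction n with
  | zero =>
    intro l hl _ _ _
    obtain ⟨a, rfl⟩ := List.length_eq_one_iff.1 hl
    simpa using GreedySup.single a
  | succ n ih =>
    intro l hl hnd hG hZ
    match l, hl with
    | a :: b :: r, hl =>
      have hab : a ≠ b := by simp at hnd; grind
      have ha : a ∈ (a :: b :: r).toFinset := by simp
      have hb : b ∈ (a :: b :: r).toFinset := by simp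
      have h0 := hZ a ha b hb hab
      have hmax : ∀ x ∈ (a :: b :: r).toFinset, ∀ y ∈ (a :: b :: r).toFinset, x ≠ y →
          ov x y ≤ ov a b := fun x hx y hy hxy => by rw [hZ x hx y hy hxy]; omega
      have hG' := hG.step ha hb hmax
      have hZ' := hZ.step hG ha hb hab
      have hnm := merge_notMem (v := b) hG ha
      have e : (a :: b :: r).toFinset \ {a, b} ∪ {merge a b} = ((a ++ b) :: r).toFinset := by
        rw [merge_zero h0]
        ext x
        simp at hnd ⊢
        grind
      refine GreedySup.step a b ha hb hab hmax ?_
      rw [e] at hG' hZ' ⊢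
      have := ih ((a ++ b) :: r) (by simpa using hl) ?_ hG' hZ'
      · simpa using this
      · rw [merge_zero h0] at hnm
        have hl1 := hG.1 a ha
        have hl2 := hG.1 b hb
        simp [hl1, hl2] at hnm hnd ⊢
        exact ⟨hnm, hnd.2.2⟩

theorem lift_inj {α : Type*} : Function.Injective (lift : List α → _) :=
  List.map_injective_iff.2 Sum.inl_injective

theorem bar_inj {α : Type*} : Function.Injective (bar : List α → _) :=
  List.map_injective_iff.2 Sum.inr_injective

theorem lift_ne_bar {α : Type*} (x y : List α) (h : lift x ≠ []) : lift x ≠ bar y := by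
  cases x <;> cases y <;> simp [lift, bar] at h ⊢

theorem ov_lift_bar {α : Type*} [DecidableEq α] (x y : List α) (hx : lift x ≠ [])
    (hy : bar y ≠ []) : ov (lift x) (bar y) = 0 := by
  obtain ⟨p, s, t, -, -, e1, e2, e3⟩ := ov_spec _ _ hx hy
  rw [← e3]
  cases s with
  | nil => rfl
  | cons c s =>
    have h1 : c ∈ lift x := by simp [e1]
    have h2 : c ∈ bar y := by simp [e2]
    simp [lift, bar] at h1 h2
    grind

theorem ov_bar_lift {α : Type*} [DecidableEq α] (x y : List α) (hx : lift x ≠ [])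
    (hy : bar y ≠ []) : ov (bar y) (lift x) = 0 := by
  obtain ⟨p, s, t, -, -, e1, e2, e3⟩ := ov_spec _ _ hy hx
  rw [← e3]
  cases s with
  | nil => rfl
  | cons c s =>
    have h1 : c ∈ bar y := by simp [e1]
    have h2 : c ∈ lift x := by simp [e2]
    simp [lift, bar] at h1 h2
    grind

theorem restrict_lift {α : Type*} (x : List α) : restrict (lift x) = x := by
  induction x with
  | nil => rfl
  | cons a x ih => simp_all [restrict, lift]

theorem restrict_bar {α : Type*} (x : List α) : restrict (bar x) = [] := by
  simp [restrict, bar]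

theorem restrict_flatten {α : Type*} (l : List (List (α ⊕ α))) :
    restrict l.flatten = (l.map restrict).flatten := by
  unfold restrict
  rw [List.filterMap_flatten]

/-- If everything in the list is a lift or a bar, its lifted part is a list of `A`. -/
theorem split_list {α : Type*} (l : List (List (α ⊕ α)))
    (h : ∀ s ∈ l, s ≠ [] ∧ ((∃ a, s = lift a) ∨ ∃ b, s = bar b)) (hl : l.Nodup) :
    ∃ m : List (List α), m.Nodup ∧ (∀ x, x ∈ m ↔ lift x ∈ l) ∧ restrict l.flatten = m.flatten := by
  induction l with
  | nil => exact ⟨[], by simp [restrict]⟩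
  | cons s l ih =>
    obtain ⟨m, h1, h2, h3⟩ := ih (fun s hs => h s (by simp [hs])) (List.nodup_cons.1 hl).2
    obtain ⟨hs, ⟨a, rfl⟩ | ⟨b, rfl⟩⟩ := h s (by simp)
    · refine ⟨a :: m, ?_, ?_, ?_⟩
      · rw [List.nodup_cons] at hl ⊢
        exact ⟨fun h => hl.1 ((h2 a).1 h), h1⟩
      · intro x; simp [h2, lift_inj.eq_iff]
      · rw [restrict_flatten] at h3 ⊢
        simp [restrict_lift, h3]
    · refine ⟨m, h1, ?_, ?_⟩
      · intro x
        have : lift x ≠ bar b := by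
          intro e
          exact lift_ne_bar x b (by rw [e]; exact hs) e
        simp [h2, this]
      · rw [restrict_flatten] at h3 ⊢
        simp [restrict_bar, h3]

theorem main {α : Type*} [DecidableEq α] {Q : Finset (List (α ⊕ α))} {z : List (α ⊕ α)}
    (h : GreedySup Q z) : ∀ A B : Finset (List α), Q = A.image lift ∪ B.image bar → Good Q →
      A.Nonempty → GreedySup A (restrict z) := by
  induction h with
  | single w =>
    rintro A B e hG ⟨a, ha⟩
    have h1 : ∀ x ∈ A, lift x = w := by
      intro x hx
      have : lift x ∈ ({w} : Finset (List (α ⊕ α))) := by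
        rw [e]; exact Finset.mem_union_left _ (Finset.mem_image_of_mem _ hx)
      simpa using this
    have : A = {a} := by
      ext x
      constructor
      · intro hx; simp; exact lift_inj ((h1 x hx).trans (h1 a ha).symm)
      · intro hx; simp at hx; exact hx ▸ ha
    rw [this, ← h1 a ha, restrict_lift]
    exact GreedySup.single a
  | @step Q z u v hu hv hne hmax hrec ih =>
    intro A B e hG hA
    have hAQ : ∀ x ∈ A, lift x ∈ Q := by
      intro x hx; rw [e]; exact Finset.mem_union_left _ (Finset.mem_image_of_mem _ hx)
    have hBQ : ∀ x ∈ B, bar x ∈ Q := by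
      intro x hx; rw [e]; exact Finset.mem_union_right _ (Finset.mem_image_of_mem _ hx)
    have hQ' : ∀ q, q ∈ Q ↔ (∃ a ∈ A, lift a = q) ∨ ∃ b ∈ B, bar b = q := by
      intro q; rw [e]; simp
    have hLB : ∀ x ∈ A, ∀ y, lift x ≠ bar y := fun x hx y => lift_ne_bar x y (hG.1 _ (hAQ x hx))
    have hLB' : ∀ y ∈ B, ∀ x, lift x ≠ bar y := by
      intro y hy x e
      exact lift_ne_bar x y (by rw [e]; exact hG.1 _ (hBQ y hy)) e
    have hGA : Good A := by
      constructor
      · rintro s hs rfl; exact hG.1 _ (hAQ _ hs) rfl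
      · intro s hs t ht hst hin
        exact hG.2 _ (hAQ s hs) _ (hAQ t ht) (lift_inj.ne hst) (hin.map _)
    by_cases h0 : ov u v = 0
    · have hZ : Zero Q := fun x hx y hy hxy => by have := hmax x hx y hy hxy; omega
      obtain ⟨l, hl, hlQ, hz⟩ := zero_list (GreedySup.step u v hu hv hne hmax hrec) hG hZ
      have hlm : ∀ q, q ∈ l ↔ q ∈ Q := by intro q; rw [← hlQ]; simp
      obtain ⟨m, hm1, hm2, hm3⟩ := split_list l (by
        intro s hs
        rw [hlm] at hs
        refine ⟨hG.1 s hs, ?_⟩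
        rcases (hQ' s).1 hs with ⟨a, _, rfl⟩ | ⟨a, _, rfl⟩ <;> simp) hl
      have hmA : m.toFinset = A := by
        ext x
        rw [List.mem_toFinset, hm2, hlm, hQ']
        constructor
        · rintro (⟨a, ha, e⟩ | ⟨b, hb, e⟩)
          · exact lift_inj e ▸ ha
          · exact absurd e.symm (hLB' b hb x)
        · intro hx; exact Or.inl ⟨x, hx, rfl⟩
      have hZA : Zero A := by
        intro x hx y hy hxy
        rw [← ov_map (Sum.inl : α → α ⊕ α) Sum.inl_injective x y]
        exact hZ _ (hAQ x hx) _ (hAQ y hy) (lift_inj.ne hxy)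
      rw [hz, hm3]
      have hlen : m ≠ [] := by
        rintro rfl
        simp at hmA
        rw [← hmA] at hA
        simp at hA
      have := List.length_pos_iff.2 hlen
      subst hmA
      exact list_zero (m.length - 1) m (by omega) hm1 hGA hZA
    · have hG' := hG.step hu hv hmax
      rcases (hQ' u).1 hu with ⟨a, ha, rfl⟩ | ⟨a, ha, rfl⟩ <;>
      rcases (hQ' v).1 hv with ⟨b, hb, rfl⟩ | ⟨b, hb, rfl⟩
      · have hmm : merge (lift a) (lift b) = lift (merge a b) := merge_map _ Sum.inl_injective _ _
        refine GreedySup.step a b ha hb (fun h => hne (h ▸ rfl)) ?_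
          (ih _ B ?_ hG' ⟨merge a b, by simp⟩)
        · intro x hx y hy hxy
          rw [← ov_map (Sum.inl : α → α ⊕ α) Sum.inl_injective x y, ← ov_map (Sum.inl : α → α ⊕ α) Sum.inl_injective a b]
          exact hmax _ (hAQ x hx) _ (hAQ y hy) (lift_inj.ne hxy)
        · rw [hmm]
          ext q
          simp only [Finset.mem_union, Finset.mem_sdiff, Finset.mem_insert, Finset.mem_singleton,
            Finset.mem_image, hQ']
          have := @lift_inj α
          unfold Function.Injective at this
          grind
      · exact absurd (ov_lift_bar a b (hG.1 _ hu) (hG.1 _ hv)) h0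
      · exact absurd (ov_bar_lift b a (hG.1 _ hv) (hG.1 _ hu)) h0
      · have hmm : merge (bar a) (bar b) = bar (merge a b) := merge_map _ Sum.inr_injective _ _
        refine ih A ((B \ {a, b}) ∪ {merge a b}) ?_ hG' hA
        rw [hmm]
        ext q
        simp only [Finset.mem_union, Finset.mem_sdiff, Finset.mem_insert, Finset.mem_singleton,
          Finset.mem_image, hQ']
        have := @bar_inj α
        unfold Function.Injective at this
        grind

end RG

/-- If `w` is a greedy linear superstring of `f(P)`, then the `Σ`-restriction of `w` is a
greedy linear superstring of `P`. -/
theorem restrict_greedySup {α : Type*} [DecidableEq α] (P : Finset (List α))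
    (hne : ∀ s ∈ P, s ≠ ([] : List α))
    (hinf : ∀ s ∈ P, ∀ t ∈ P, s ≠ t → ¬ s <:+: t)
    (w : List (α ⊕ α)) (hw : GreedySup (P.image lift ∪ P.image bar) w) :
    GreedySup P (restrict w) := by
  have hP : P.Nonempty := by
    rw [Finset.nonempty_iff_ne_empty]
    rintro rfl
    simp at hw
    generalize hE : (∅ : Finset (List (α ⊕ α))) = E at hw
    cases hw with
    | single => simp at hE
    | step u v hu => subst hE; simp at hu
  refine RG.main hw P P rfl ⟨?_, ?_⟩ hP
  · intro s hs
    simp at hs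
    rcases hs with ⟨a, ha, rfl⟩ | ⟨a, ha, rfl⟩ <;> simp [lift, bar, hne a ha]
  · intro s hs t ht hst hin
    simp only [Finset.mem_union, Finset.mem_image] at hs ht
    rcases hs with ⟨a, ha, rfl⟩ | ⟨a, ha, rfl⟩ <;> rcases ht with ⟨b, hb, rfl⟩ | ⟨b, hb, rfl⟩
    · have := hin.filterMap (Sum.elim some (fun _ => none))
      change restrict (lift a) <:+: restrict (lift b) at this
      rw [RG.restrict_lift, RG.restrict_lift] at this
      exact hinf a ha b hb (fun h => hst (h ▸ rfl)) this
    · have := hin.filterMap (Sum.elim some (fun _ => none))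
      change restrict (lift a) <:+: restrict (bar b) at this
      rw [RG.restrict_lift, RG.restrict_bar] at this
      exact hne a ha (by simpa using this)
    · have := hin.filterMap (Sum.elim (fun _ => none) some)
      have e1 : ∀ x : List α, (bar x).filterMap (Sum.elim (fun _ => none) some) = x := by
        intro x; induction x <;> simp_all [bar]
      have e2 : ∀ x : List α, (lift x).filterMap
          (Sum.elim (fun _ : α => (none : Option α)) some) = [] := by
        intro x; simp [lift]
      rw [e1, e2] at this
      exact hne a ha (by simpa using this)
    · have := hin.filterMap (Sum.elim (fun _ => none) some)
      have e1 : ∀ x : List α, (bar x).filterMap (Sum.elim (fun _ => none) some) = x := by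
        intro x; induction x <;> simp_all [bar]
      rw [e1, e1] at this
      exact hinf a ha b hb (fun h => hst (h ▸ rfl)) this
end

section
/- Let Q be a finite set of nonempty strings over an alphabet α such that no string of Q is an infix of another string of Q, and let u, v ∈ Q be distinct strings with ov(u,v) ≥ ov(x,y) for all distinct x, y ∈ Q. Let Q' = (Q \ {u,v}) ∪ {u ⊙ v}. Then for all distinct x, y ∈ Q', ov(x,y) ≤ ov(u,v); that is, the overlaps chosen by successive steps of the greedy algorithm are non-increasing. -/
theorem le_ov_of {α : Type*} [DecidableEq α] {x y s : List α} (hx : s <:+ x) (hy : s <+: y)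
    (h1 : s.length < x.length) (h2 : s.length < y.length) : s.length ≤ ov x y := by
  unfold ov
  refine Nat.le_findGreatest (by omega) ⟨h1, h2, ?_⟩
  rw [← List.suffix_iff_eq_drop.mp hx, ← List.prefix_iff_eq_take.mp hy]

theorem ov_spec_s13 {α : Type*} [DecidableEq α] (x y : List α) (h : ov x y ≠ 0) :
    ∃ s, s.length = ov x y ∧ s <:+ x ∧ s <+: y ∧ s.length < x.length ∧ s.length < y.length := by
  obtain ⟨h1, h2, h3⟩ := Nat.findGreatest_of_ne_zero (m := ov x y) rfl h
  have hl : (y.take (ov x y)).length = ov x y := by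
    rw [List.length_take]; omega
  refine ⟨y.take (ov x y), hl, ?_, List.take_prefix _ _, by omega, by omega⟩
  rw [← h3]; exact List.drop_suffix _ _

theorem suffix_merge {α : Type*} [DecidableEq α] (u v : List α) : v <:+ merge u v := by
  unfold merge
  by_cases h : ov u v = 0
  · simp [h]
  · obtain ⟨s, hl, ⟨a, rfl⟩, ⟨b, hb⟩, -, -⟩ := ov_spec_s13 u v h
    rw [← hl]
    refine ⟨a, ?_⟩
    have : v.drop s.length = b := by rw [← hb]; simp
    rw [this, ← hb, List.append_assoc]

/-- The overlaps chosen by successive steps of the greedy algorithm are non-increasing: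
after merging a pair `u, v` of maximal overlap, every overlap between distinct strings of the
resulting set is at most `ov u v`. -/
theorem greedy_overlaps_antitone {α : Type*} [DecidableEq α] (Q : Finset (List α))
    (hne : ∀ s ∈ Q, s ≠ ([] : List α))
    (hinf : ∀ s ∈ Q, ∀ t ∈ Q, s ≠ t → ¬ s <:+: t)
    (u v : List α) (hu : u ∈ Q) (hv : v ∈ Q) (huv : u ≠ v)
    (hmax : ∀ x ∈ Q, ∀ y ∈ Q, x ≠ y → ov x y ≤ ov u v) :
    ∀ x ∈ (Q \ {u, v}) ∪ {merge u v}, ∀ y ∈ (Q \ {u, v}) ∪ {merge u v}, x ≠ y →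
      ov x y ≤ ov u v := by
  have key1 : ∀ x ∈ Q, x ≠ u → ov x (merge u v) ≤ ov u v := by
    intro x hx hxu
    by_cases h0 : ov x (merge u v) = 0
    · omega
    obtain ⟨s, hl, hs, hp, h1, h2⟩ := ov_spec_s13 _ _ h0
    have hum : u <+: merge u v := List.prefix_append _ _
    rcases lt_or_ge s.length u.length with h | h
    · have := le_ov_of hs (List.prefix_of_prefix_length_le hp hum h.le) h1 h
      have := hmax x hx u hu hxu
      omega
    · exact absurd ((List.prefix_of_prefix_length_le hum hp h).isInfix.trans hs.isInfix)
        (hinf u hu x hx hxu.symm)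
  have key2 : ∀ y ∈ Q, y ≠ v → ov (merge u v) y ≤ ov u v := by
    intro y hy hyv
    by_cases h0 : ov (merge u v) y = 0
    · omega
    obtain ⟨s, hl, hs, hp, h1, h2⟩ := ov_spec_s13 _ _ h0
    have hvm := suffix_merge u v
    rcases lt_or_ge s.length v.length with h | h
    · have := le_ov_of (List.suffix_of_suffix_length_le hs hvm h.le) hp h h2
      have := hmax v hv y hy hyv.symm
      omega
    · exact absurd ((List.suffix_of_suffix_length_le hvm hs h).isInfix.trans hp.isInfix)
        (hinf v hv y hy hyv.symm)
  intro x hx y hy hxy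
  simp only [Finset.mem_union, Finset.mem_sdiff, Finset.mem_insert, Finset.mem_singleton,
    not_or] at hx hy
  rcases hx with ⟨hx, hxu, hxv⟩ | rfl <;> rcases hy with ⟨hy, hyu, hyv⟩ | rfl
  · exact hmax x hx y hy hxy
  · exact key1 x hx hxu
  · exact key2 y hy hyv
  · exact absurd rfl hxy
end
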